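/- arXiv:2412.13355 — 2 statements merged into one kernel-verified Lean document; each statement's English description precedes it below -/
import Mathlib

section
/- There exists an absolute constant c > 0 such that for every real x ≥ 3 and every positive integer m with m ≤ (log x)/log 2, one has #{n ∈ ℕ : n ≤ x, Ω(n) = m} ≥ c · x/(2^m · log x). -/
open Real

/-- `Ω(n)`, the number of prime factors of `n` counted with multiplicity. -/
def bigOmega (n : ℕ) : ℕ := n.primeFactorsList.length

/-!
If `Ω(a) = k`, then `p ↦ a * p` injects the primes `p ≤ x / a` into the integers `n ≤ x` with
`Ω(n) = k + 1`. Taking `a = 2 ^ (m - 1)`, the condition `m ≤ log x / log 2` says exactly that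
`2 ≤ x / a`, so Chebyshev's lower bound for the number of primes up to `x / a` applies.
-/

theorem div_twelve_le_psi {x : ℝ} (hx : 2 ≤ x) : x / 12 ≤ Chebyshev.psi x := by
  have two_le_floor : (2 : ℝ) ≤ ⌊x⌋₊ := by exact_mod_cast Nat.le_floor (n := 2) hx
  have lt_floor_add_one : x < ⌊x⌋₊ + 1 := Nat.lt_floor_add_one x
  have psi_floor_ge := Chebyshev.psi_ge ⌊x⌋₊
  rw [← Chebyshev.psi_eq_psi_coe_floor] at psi_floor_ge
  -- The tangent at `4` turns the claim into `(⌊x⌋₊ - 2) * (log 2 - 1 / 3) ≥ 0`.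
  have log_le_tangent : log (⌊x⌋₊ + 1 : ℝ) ≤ (⌊x⌋₊ + 1) / 4 - 1 + 2 * log 2 := by
    have log_div_le := log_le_sub_one_of_pos (show (0 : ℝ) < (⌊x⌋₊ + 1) / 4 by positivity)
    have log_four : log 4 = 2 * log 2 := by
      rw [show (4 : ℝ) = 2 ^ 2 by norm_num, log_pow, Nat.cast_ofNat]
    rw [log_div (by positivity) (by norm_num), log_four] at log_div_le
    linarith
  have product_nonneg : 0 ≤ ((⌊x⌋₊ : ℝ) - 2) * (log 2 - 1 / 3) :=
    mul_nonneg (by linarith) (by linarith [log_two_gt_d9])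
  linarith

theorem div_log_le_primeCounting {x : ℝ} (hx : 2 ≤ x) :
    x / (12 * log x) ≤ Nat.primeCounting ⌊x⌋₊ := by
  rw [← div_div, div_le_iff₀ (log_pos (by linarith))]
  exact (div_twelve_le_psi hx).trans (Chebyshev.psi_le_primeCounting_mul_log' x)

theorem bigOmega_eq_cardFactors (n : ℕ) : bigOmega n = ArithmeticFunction.cardFactors n := rfl

theorem bigOmega_two_pow (k : ℕ) : bigOmega (2 ^ k) = k := by
  rw [bigOmega_eq_cardFactors, ArithmeticFunction.cardFactors_apply_prime_pow Nat.prime_two]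

theorem bigOmega_mul_prime {a p : ℕ} (ha : a ≠ 0) (hp : p.Prime) :
    bigOmega (a * p) = bigOmega a + 1 := by
  simp only [bigOmega_eq_cardFactors, ArithmeticFunction.cardFactors_mul ha hp.ne_zero,
    ArithmeticFunction.cardFactors_apply_prime hp]

theorem primeCounting_floor_div_le_ncard_bigOmega {a : ℕ} (ha : a ≠ 0) (x : ℝ) :
    Nat.primeCounting ⌊x / a⌋₊ ≤ {n : ℕ | (n : ℝ) ≤ x ∧ bigOmega n = bigOmega a + 1}.ncard := by
  rw [← Nat.primesLE_card_eq_primeCounting, ← Set.ncard_coe_finset]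
  refine Set.ncard_le_ncard_of_injOn (a * ·) ?_ (mul_right_injective₀ ha).injOn
    ((Set.finite_Iic ⌊x⌋₊).subset fun n hn ↦ Nat.le_floor hn.1)
  intro p hp
  obtain ⟨hpx, hp⟩ := Nat.mem_primesLE.mp hp
  refine ⟨?_, bigOmega_mul_prime ha hp⟩
  rw [Nat.le_floor_iff' hp.ne_zero, le_div_iff₀' (by positivity)] at hpx
  exact_mod_cast hpx

theorem div_mul_log_le_ncard_bigOmega {a : ℕ} {x : ℝ} (hx : 2 ≤ x / a) :
    x / (12 * a * log (x / a)) ≤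
      {n : ℕ | (n : ℝ) ≤ x ∧ bigOmega n = bigOmega a + 1}.ncard := by
  have ha : a ≠ 0 := by
    rintro rfl
    norm_num at hx
  calc x / (12 * a * log (x / a)) = x / a / (12 * log (x / a)) := by
        rw [div_div, mul_left_comm, mul_assoc]
    _ ≤ Nat.primeCounting ⌊x / a⌋₊ := div_log_le_primeCounting hx
    _ ≤ _ := by exact_mod_cast primeCounting_floor_div_le_ncard_bigOmega ha x

theorem nicolas_lower_bound :
    ∃ c : ℝ, 0 < c ∧
      ∀ (x : ℝ) (m : ℕ), 3 ≤ x → 0 < m → (m : ℝ) ≤ Real.log x / Real.log 2 →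
        c * x / (2 ^ m * Real.log x) ≤ ({n : ℕ | (n : ℝ) ≤ x ∧ bigOmega n = m}.ncard : ℝ) := by
  refine ⟨1 / 6, by norm_num, fun x m hx hm hmx ↦ ?_⟩
  obtain ⟨k, rfl⟩ := Nat.exists_eq_add_one.mpr hm
  have x_pos : 0 < x := by linarith
  have two_pow_le : (2 : ℝ) ^ (k + 1) ≤ x := by
    rwa [← log_le_log_iff (by positivity) x_pos, log_pow, ← le_div_iff₀ (log_pos one_lt_two)]
  have two_le_div : 2 ≤ x / (2 ^ k : ℕ) := by
    rwa [le_div_iff₀ (by positivity), Nat.cast_pow, Nat.cast_ofNat, ← pow_succ']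
  have log_div_pos : 0 < log (x / (2 ^ k : ℕ)) := log_pos (by linarith)
  have div_le : x / (2 ^ k : ℕ) ≤ x :=
    div_le_self x_pos.le (by exact_mod_cast Nat.one_le_two_pow)
  calc 1 / 6 * x / (2 ^ (k + 1) * log x) = x / (12 * (2 ^ k : ℕ) * log x) := by
        push_cast
        field_simp
        ring
    _ ≤ x / (12 * (2 ^ k : ℕ) * log (x / (2 ^ k : ℕ))) := by gcongr
    _ ≤ {n : ℕ | (n : ℝ) ≤ x ∧ bigOmega n = bigOmega (2 ^ k) + 1}.ncard :=
        div_mul_log_le_ncard_bigOmega two_le_div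
    _ = _ := by rw [bigOmega_two_pow]
end

section
/- Let y ≥ 1 be a real number and let k, w be positive integers. Let A_w(y) = {a ∈ ℕ : 1 ≤ a ≤ y, Ω(a) = w}, and let T_k(w, y) denote the number of 2k-tuples (a_1, …, a_k, b_1, …, b_k) with all a_i, b_j ∈ A_w(y) and a_1 ⋯ a_k = b_1 ⋯ b_k. Then T_k(w, y) ≤ ((kw)! / (w!)^k) · (#A_w(y))^k. -/
open Real

/-- `A_w(y) = {a ∈ ℕ : 1 ≤ a ≤ y, Ω(a) = w}`. -/
def Aset (w : ℕ) (y : ℝ) : Set ℕ := {a : ℕ | 1 ≤ a ∧ (a : ℝ) ≤ y ∧ bigOmega a = w}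

/-!
Fix the tuple `a` and let `n = ∏ aᵢ`. By unique factorization, a tuple `b` with `∏ bᵢ = n` and
`Ω(bᵢ) = wᵢ` is a way of splitting the multiset of prime factors of `n` into blocks of sizes `wᵢ`.
Choosing the blocks one at a time, each as a submultiset of what the earlier ones leave over, bounds
the number of splittings by a product of binomial coefficients, which is the multinomial coefficient
`(∑ wᵢ)! / ∏ wᵢ!`.
-/

open Finset Function UniqueFactorizationMonoid

section MultisetCounting

variable {ι α : Type*}

lemma card_le_choose_of_forall_le {S : Multiset α} {w : ℕ} {T : Finset (Multiset α)}
    (hT : ∀ t ∈ T, t ≤ S ∧ t.card = w) : #T ≤ S.card.choose w := by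
  classical
  calc #T ≤ #(S.powersetCard w).toFinset :=
        card_le_card fun t ht ↦ by simpa [Multiset.mem_powersetCard] using hT t ht
    _ ≤ (S.powersetCard w).card := Multiset.toFinset_card_le _
    _ = S.card.choose w := Multiset.card_powersetCard w S

lemma card_image_update {β : Type*} [DecidableEq ι] [DecidableEq (ι → β)] {F : Finset (ι → β)}
    (i : ι) {t : β} (c : β) (hF : ∀ m ∈ F, m i = t) : #(F.image (update · i c)) = #F := by
  refine card_image_of_injOn fun m hm m' hm' h ↦ ?_
  calc m = update (update m i c) i t := by rw [update_idem, ← hF m hm, update_eq_self]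
    _ = update (update m' i c) i t := congrArg (update · i t) h
    _ = m' := by rw [update_idem, ← hF m' hm', update_eq_self]

/-- `m` splits the multiset `S` into blocks `m i`, indexed by `i ∈ s`, of prescribed sizes `w i`.
The values of `m` off `s` are set to `0`, so that `m` is determined by its blocks. -/
structure IsSplitting (s : Finset ι) (w : ι → ℕ) (S : Multiset α) (m : ι → Multiset α) : Prop where
  apply_eq_zero : ∀ i ∉ s, m i = 0
  card_apply : ∀ i ∈ s, (m i).card = w i
  sum_eq : ∑ i ∈ s, m i = S

namespace IsSplitting

variable {s : Finset ι} {w : ι → ℕ} {S : Multiset α} {m : ι → Multiset α} {i : ι}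

lemma card_eq_sum (h : IsSplitting s w S m) : S.card = ∑ i ∈ s, w i := by
  rw [← h.sum_eq, Multiset.card_sum, sum_congr rfl h.card_apply]

lemma apply_le (h : IsSplitting s w S m) (hi : i ∈ s) : m i ≤ S :=
  h.sum_eq ▸ single_le_sum_of_canonicallyOrdered hi

lemma update_zero [DecidableEq ι] [DecidableEq α] (hi : i ∉ s)
    (h : IsSplitting (insert i s) w S m) : IsSplitting s w (S - m i) (update m i 0) where
  apply_eq_zero j hj := by
    obtain rfl | hji := eq_or_ne j i
    · exact update_self j 0 m
    · rw [update_of_ne hji, h.apply_eq_zero j (by simp [hji, hj])]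
  card_apply j hj := by
    rw [update_of_ne (ne_of_mem_of_not_mem hj hi), h.card_apply j (mem_insert_of_mem hj)]
  sum_eq := by
    rw [sum_update_of_notMem hi, ← h.sum_eq, sum_insert hi, add_tsub_cancel_left]

end IsSplitting

lemma card_le_multinomial_of_forall_isSplitting {s : Finset ι} {w : ι → ℕ} {S : Multiset α}
    {F : Finset (ι → Multiset α)} (hF : ∀ m ∈ F, IsSplitting s w S m) :
    #F ≤ Nat.multinomial s w := by
  classical
  induction s using Finset.induction_on generalizing S F with
  | empty =>
    have eq_zero (m : ι → Multiset α) (hm : m ∈ F) : m = 0 :=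
      funext fun i ↦ (hF m hm).apply_eq_zero i (notMem_empty i)
    rw [Nat.multinomial_empty]
    exact card_le_one.2 fun m hm m' hm' ↦ (eq_zero m hm).trans (eq_zero m' hm').symm
  | insert i s hi ih =>
    have card_image : #(F.image (· i)) ≤ (w i + ∑ j ∈ s, w j).choose (w i) := by
      obtain rfl | ⟨m₀, hm₀⟩ := F.eq_empty_or_nonempty
      · simp
      rw [← sum_insert hi, ← (hF m₀ hm₀).card_eq_sum]
      exact card_le_choose_of_forall_le (forall_mem_image.2 fun m hm ↦
        ⟨(hF m hm).apply_le (mem_insert_self i s),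
          (hF m hm).card_apply i (mem_insert_self i s)⟩)
    have card_fiber (t : Multiset α) : #{m ∈ F | m i = t} ≤ Nat.multinomial s w := by
      rw [← card_image_update i 0 fun m hm ↦ (mem_filter.1 hm).2]
      refine ih (S := S - t) (forall_mem_image.2 fun m hm ↦ ?_)
      obtain ⟨hmF, rfl⟩ := mem_filter.1 hm
      exact (hF m hmF).update_zero hi
    calc #F ≤ Nat.multinomial s w * #(F.image (· i)) :=
          card_le_mul_card_image F _ fun t _ ↦ card_fiber t
      _ ≤ Nat.multinomial s w * (w i + ∑ j ∈ s, w j).choose (w i) :=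
          Nat.mul_le_mul_left _ card_image
      _ = Nat.multinomial (insert i s) w := by rw [Nat.multinomial_insert hi, mul_comm]

end MultisetCounting

section UniqueFactorization

variable {ι M : Type*} [Fintype ι] [CommMonoidWithZero M] [UniqueFactorizationMonoid M]
  [Subsingleton Mˣ]

lemma factors_injOn : Set.InjOn (factors : M → Multiset M) {a | a ≠ 0} := by
  intro a ha b hb h
  rw [factors_eq_normalizedFactors, factors_eq_normalizedFactors] at h
  exact associated_iff_eq.1 ((associated_iff_normalizedFactors_eq_normalizedFactors ha hb).2 h)

lemma factors_prod {b : ι → M} (hb : ∀ i, b i ≠ 0) : factors (∏ i, b i) = ∑ i, factors (b i) := by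
  simp only [factors_eq_normalizedFactors]
  rw [prod_eq_multiset_prod, normalizedFactors_multiset_prod _ (by simpa using hb),
    Multiset.map_map]
  rfl

lemma card_le_multinomial_of_forall_prod_eq {w : ι → ℕ} {n : M} {F : Finset (ι → M)}
    (hF : ∀ b ∈ F, (∀ i, b i ≠ 0 ∧ (factors (b i)).card = w i) ∧ ∏ i, b i = n) :
    #F ≤ Nat.multinomial univ w := by
  classical
  have factors_injOn_F : Set.InjOn (fun b : ι → M ↦ factors ∘ b) F := fun b hb b' hb' h ↦
    funext fun i ↦ factors_injOn ((hF b hb).1 i).1 ((hF b' hb').1 i).1 (congrFun h i)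
  rw [← card_image_of_injOn factors_injOn_F]
  refine card_le_multinomial_of_forall_isSplitting (S := factors n)
    (forall_mem_image.2 fun b hb ↦ ?_)
  obtain ⟨hfac, rfl⟩ := hF b hb
  exact ⟨fun i hi ↦ absurd (mem_univ i) hi, fun i _ ↦ (hfac i).2,
    (factors_prod fun i ↦ (hfac i).1).symm⟩

lemma card_filter_prod_eq_prod_le [DecidableEq M] {w : ι → ℕ} {B : Finset (ι → M)}
    (A : Finset (ι → M)) (hB : ∀ b ∈ B, ∀ i, b i ≠ 0 ∧ (factors (b i)).card = w i) :
    #{p ∈ A ×ˢ B | ∏ i, p.1 i = ∏ i, p.2 i} ≤ Nat.multinomial univ w * #A := by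
  classical
  refine card_le_mul_card_image_of_maps_to (f := Prod.fst)
    (fun p hp ↦ (mem_product.1 (mem_filter.1 hp).1).1) _ fun a _ ↦ ?_
  have snd_injOn : Set.InjOn (Prod.snd : (ι → M) × (ι → M) → ι → M)
      {p ∈ ({p ∈ A ×ˢ B | ∏ i, p.1 i = ∏ i, p.2 i} : Finset _) | p.1 = a} :=
    fun p hp q hq h ↦ Prod.ext (hp.2.trans hq.2.symm) h
  rw [← card_image_of_injOn (by simpa only [coe_filter] using snd_injOn)]
  refine card_le_multinomial_of_forall_prod_eq (n := ∏ i, a i) (forall_mem_image.2 fun p hp ↦ ?_)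
  simp only [mem_filter, mem_product] at hp
  obtain ⟨⟨⟨-, hpB⟩, hprod⟩, rfl⟩ := hp
  exact ⟨hB p.2 hpB, hprod.symm⟩

theorem Tk_multinomial_bound_general (w : ι → ℕ) (A : ι → Set M) (hfin : ∀ i, (A i).Finite)
    (hA : ∀ i, ∀ a ∈ A i, a ≠ 0 ∧ (factors a).card = w i) :
    ({p : (ι → M) × (ι → M) |
        (∀ i, p.1 i ∈ A i) ∧ (∀ i, p.2 i ∈ A i) ∧ ∏ i, p.1 i = ∏ i, p.2 i}.ncard : ℝ)
      ≤ ((∑ i, w i).factorial : ℝ) / (∏ i, ((w i).factorial : ℝ)) * ∏ i, ((A i).ncard : ℝ) := by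
  classical
  lift A to ι → Finset M using hfin
  have cast_multinomial : (Nat.multinomial univ w : ℝ)
      = ((∑ i, w i).factorial : ℝ) / ∏ i, ((w i).factorial : ℝ) := by
    rw [eq_div_iff (by positivity), mul_comm]
    exact_mod_cast Nat.multinomial_spec univ w
  have tuples_eq : {p : (ι → M) × (ι → M) | (∀ i, p.1 i ∈ (A i : Set M)) ∧
      (∀ i, p.2 i ∈ (A i : Set M)) ∧ ∏ i, p.1 i = ∏ i, p.2 i} =
      ({p ∈ Fintype.piFinset A ×ˢ Fintype.piFinset A | ∏ i, p.1 i = ∏ i, p.2 i} :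
        Finset ((ι → M) × (ι → M))) := by
    ext p
    simp [and_assoc]
  rw [tuples_eq, ← cast_multinomial, Set.ncard_coe_finset]
  simp only [Set.ncard_coe_finset]
  rw [← Nat.cast_prod, ← Fintype.card_piFinset]
  exact_mod_cast card_filter_prod_eq_prod_le _ fun b hb i ↦ hA i _ (Fintype.mem_piFinset.1 hb i)

end UniqueFactorization

lemma bigOmega_eq_card_factors (n : ℕ) : bigOmega n = (factors n).card := by
  rw [bigOmega, ← Multiset.coe_card, ← Nat.factors_eq, normalizedFactors, Multiset.card_map]

lemma Aset_finite (w : ℕ) (y : ℝ) : (Aset w y).Finite :=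
  (Set.finite_Iic ⌊y⌋₊).subset fun _ ha ↦ Nat.le_floor ha.2.1

theorem Tk_multinomial_bound (y : ℝ) (hy : 1 ≤ y) (k w : ℕ) (hk : 0 < k) (hw : 0 < w) :
    ({p : (Fin k → ℕ) × (Fin k → ℕ) |
        (∀ i, p.1 i ∈ Aset w y) ∧ (∀ i, p.2 i ∈ Aset w y) ∧
          ∏ i, p.1 i = ∏ i, p.2 i}.ncard : ℝ)
      ≤ ((k * w).factorial : ℝ) / (w.factorial : ℝ) ^ k * ((Aset w y).ncard : ℝ) ^ k := by
  simpa using Tk_multinomial_bound_general (fun _ : Fin k ↦ w) (fun _ ↦ Aset w y)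
    (fun _ ↦ Aset_finite w y) fun _ a ha ↦
      ⟨Nat.one_le_iff_ne_zero.1 ha.1, (bigOmega_eq_card_factors a).symm.trans ha.2.2⟩
end
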